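/- Let K be a scattered compact Hausdorff space. Then the Borel σ-algebra generated by the weak topology on C*(K) coincides with the Borel σ-algebra generated by the dual norm topology on C*(K), i.e. Bo(C*(K), w) = Bo(C*(K), ‖·‖). -/

import Mathlib

open NormedSpace MeasureTheory

/-- The weak topology on a normed space `E`: the topology induced by its topological dual. -/
noncomputable def weakTopology (E : Type*) [NormedAddCommGroup E] [NormedSpace ℝ E] :
    TopologicalSpace E :=
  TopologicalSpace.induced (fun x : E => fun Λ : StrongDual ℝ E => Λ x) Pi.topologicalSpace

theorem aux_borel {E : Type*} [NormedAddCommGroup E] [NormedSpace ℝ E] {ι : Type*}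
    (e : ι → StrongDual ℝ E) (he : ∀ x, HasSum (fun i => |e i x|) ‖x‖) :
    @borel E (weakTopology E) = borel E := by
  have hcont : ∀ Λ : StrongDual ℝ E, @Continuous E ℝ (weakTopology E) _ (fun x => Λ x) := by
    intro Λ
    have h : @Continuous E (StrongDual ℝ E → ℝ) (weakTopology E) _ (fun x Λ => Λ x) := by
      unfold weakTopology
      exact continuous_induced_dom
    exact (@continuous_pi_iff E (StrongDual ℝ E) (fun _ => ℝ) (weakTopology E) _ _).1 h Λ
  have hle : ∀ V : Set E, @IsOpen E (weakTopology E) V → IsOpen V := by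
    intro V hV
    obtain ⟨W, hW, rfl⟩ := hV
    exact hW.preimage (continuous_pi fun Λ => Λ.continuous)
  apply le_antisymm
  · apply MeasurableSpace.generateFrom_le
    intro V hV
    exact MeasurableSpace.measurableSet_generateFrom (hle V hV)
  · apply MeasurableSpace.generateFrom_le
    intro G hG
    have key : ∀ x ∈ G, ∃ s : ℚ, ‖x‖ ≤ s ∧ ∃ V : Set E, @IsOpen E (weakTopology E) V ∧ x ∈ V ∧
        V ∩ {y | ‖y‖ ≤ s} ⊆ G := by
      intro x hx
      obtain ⟨ε, hε, hball⟩ := Metric.isOpen_iff.1 hG x hx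
      obtain ⟨s, hs1, hs2⟩ := exists_rat_btwn (show ‖x‖ < ‖x‖ + ε / 8 by linarith)
      obtain ⟨F, hF⟩ := ((he x).eventually (lt_mem_nhds
        (show ‖x‖ - ε / 8 < ‖x‖ by linarith))).exists
      refine ⟨s, hs1.le, {y | ∑ i ∈ F, |e i y - e i x| < ε / 8}, ?_, ?_, ?_⟩
      · let := weakTopology E
        refine isOpen_lt ?_ continuous_const
        exact continuous_finsetSum _ fun i _ => ((hcont (e i)).sub continuous_const).abs
      · simp only [Set.mem_ofPred_eq, sub_self, abs_zero, Finset.sum_const_zero]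
        linarith
      · rintro y ⟨hy1, hy2⟩
        simp only [Set.mem_ofPred_eq] at hy1 hy2
        apply hball
        rw [mem_ball_iff_norm]
        have h1 := sum_le_hasSum F (fun i _ => ?_) (((he y).add (he x)).sub (he (y - x)))
        · simp only [Finset.sum_sub_distrib, Finset.sum_add_distrib, map_sub] at h1
          have h2 : ∑ i ∈ F, |e i x| ≤ ∑ i ∈ F, |e i y| + ∑ i ∈ F, |e i y - e i x| := by
            rw [← Finset.sum_add_distrib]
            refine Finset.sum_le_sum fun i _ => ?_
            have := abs_sub_abs_le_abs_sub (e i x) (e i y)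
            rw [abs_sub_comm] at this
            linarith
          linarith
        · simp only [map_sub]
          have := abs_sub (e i y) (e i x)
          linarith
    let W : ℚ → Set E := fun s => ⋃₀ {V | @IsOpen E (weakTopology E) V ∧ V ∩ {y | ‖y‖ ≤ s} ⊆ G}
    have hGW : G = ⋃ s : ℚ, W s ∩ {y | ‖y‖ ≤ s} := by
      ext x
      simp only [Set.mem_iUnion]
      constructor
      · intro hx
        obtain ⟨s, hs, V, hV, hxV, hVG⟩ := key x hx
        exact ⟨s, ⟨V, ⟨hV, hVG⟩, hxV⟩, hs⟩
      · rintro ⟨s, ⟨V, ⟨hV, hVG⟩, hxV⟩, hs⟩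
        exact hVG ⟨hxV, hs⟩
    let := weakTopology E
    let : MeasurableSpace E := @borel E (weakTopology E)
    have : BorelSpace E := ⟨rfl⟩
    change MeasurableSet G
    rw [hGW]
    refine MeasurableSet.iUnion fun s => MeasurableSet.inter ?_ ?_
    · apply IsOpen.measurableSet
      exact isOpen_sUnion fun V hV => hV.1
    · have : {y : E | ‖y‖ ≤ s} = ⋂ F : Finset ι, {y | ∑ i ∈ F, |e i y| ≤ s} := by
        ext y
        simp only [Set.mem_iInter, Set.mem_ofPred_eq]
        constructor
        · intro h F
          exact (sum_le_hasSum F (fun i _ => abs_nonneg _) (he y)).trans h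
        · intro h
          exact le_of_tendsto' (he y) h
      rw [this]
      apply IsClosed.measurableSet
      refine isClosed_iInter fun F => isClosed_le ?_ continuous_const
      exact continuous_finsetSum _ fun i _ => (hcont (e i)).abs

noncomputable def mulDual {K : Type*} [TopologicalSpace K] [CompactSpace K] (g : C(K, ℝ)) :
    StrongDual ℝ C(K, ℝ) →L[ℝ] StrongDual ℝ C(K, ℝ) :=
  (ContinuousLinearMap.compL ℝ C(K, ℝ) C(K, ℝ) ℝ).flip (ContinuousLinearMap.mul ℝ C(K, ℝ) g)

theorem mulDual_apply {K : Type*} [TopologicalSpace K] [CompactSpace K] (g : C(K, ℝ))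
    (μ : StrongDual ℝ C(K, ℝ)) (f : C(K, ℝ)) : mulDual g μ f = μ (g * f) := rfl

noncomputable def deltaSpan (K : Type*) [TopologicalSpace K] [CompactSpace K] :
    Submodule ℝ (StrongDual ℝ C(K, ℝ)) :=
  (Submodule.span ℝ (Set.range fun x : K => (ContinuousMap.evalCLM ℝ x : C(K, ℝ) →L[ℝ] ℝ))).topologicalClosure

theorem delta_mem {K : Type*} [TopologicalSpace K] [CompactSpace K] (x : K) :
    (ContinuousMap.evalCLM ℝ x : C(K, ℝ) →L[ℝ] ℝ) ∈ deltaSpan K :=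
  Submodule.le_topologicalClosure _ (Submodule.subset_span ⟨x, rfl⟩)

theorem deltaSpan_closed (K : Type*) [TopologicalSpace K] [CompactSpace K] :
    IsClosed (deltaSpan K : Set (StrongDual ℝ C(K, ℝ))) :=
  Submodule.isClosed_topologicalClosure _

theorem mulDual_mem {K : Type*} [TopologicalSpace K] [CompactSpace K] (g : C(K, ℝ))
    {μ : StrongDual ℝ C(K, ℝ)} (hμ : μ ∈ deltaSpan K) : mulDual g μ ∈ deltaSpan K := by
  have : deltaSpan K ≤ (deltaSpan K).comap (mulDual g).toLinearMap := by
    refine Submodule.topologicalClosure_minimal _ ?_ ?_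
    · rw [Submodule.span_le]
      rintro _ ⟨x, rfl⟩
      have : mulDual g (ContinuousMap.evalCLM ℝ x : C(K, ℝ) →L[ℝ] ℝ) =
          g x • (ContinuousMap.evalCLM ℝ x : C(K, ℝ) →L[ℝ] ℝ) := by
        ext f; rfl
      change mulDual g (ContinuousMap.evalCLM ℝ x : C(K, ℝ) →L[ℝ] ℝ) ∈ deltaSpan K
      rw [this]
      exact Submodule.smul_mem _ _ (delta_mem x)
    · exact (deltaSpan_closed K).preimage (mulDual g).continuous
  exact this hμ

theorem exists_small {K : Type*} [TopologicalSpace K] [CompactSpace K] [T2Space K]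
    (ν : StrongDual ℝ C(K, ℝ)) (x : K) (ε : ℝ) (hε : 0 < ε) :
    ∃ h : C(K, ℝ), h x = 1 ∧
      ‖mulDual h ν - ν h • (ContinuousMap.evalCLM ℝ x : C(K, ℝ) →L[ℝ] ℝ)‖ ≤ ε := by
  set A : Set ℝ := {t | ∃ g : C(K, ℝ), g x = 0 ∧ ‖g‖ ≤ 1 ∧ ν g = t} with hA
  have hne : A.Nonempty := ⟨0, 0, rfl, by simp, by simp⟩
  have hbdd : BddAbove A := by
    refine ⟨‖ν‖, ?_⟩
    rintro _ ⟨g, _, hg, rfl⟩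
    calc ν g ≤ ‖ν g‖ := le_abs_self _
      _ ≤ ‖ν‖ * ‖g‖ := ν.le_opNorm g
      _ ≤ ‖ν‖ * 1 := by gcongr
      _ = ‖ν‖ := mul_one _
  set N := sSup A with hN
  have hN0 : 0 ≤ N := le_csSup hbdd ⟨0, rfl, by simp, by simp⟩
  set η := ε / (2 * (1 + N)) with hη
  have hη0 : 0 < η := by positivity
  have hηε : 2 * (η + N * η) = ε := by rw [hη]; field_simp
  obtain ⟨_, ⟨g₀, hg₀x, hg₀, rfl⟩, hlt⟩ := exists_lt_of_lt_csSup hne (show N - η < sSup A by linarith)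
  obtain ⟨h, h0, h1, h01⟩ := exists_continuous_zero_one_of_isClosed
    (s := {y | η ≤ |g₀ y|}) (t := {x}) (isClosed_le continuous_const (by fun_prop))
    isClosed_singleton (by simp [hg₀x, hη0])
  have hhx : h x = 1 := h1 rfl
  refine ⟨h, hhx, ?_⟩
  have main : ∀ k : C(K, ℝ), k x = 0 → ‖k‖ ≤ 1 → ν (h * k) ≤ η + N * η := by
    intro k hkx hk
    have hmem : ν ((1 + η)⁻¹ • (g₀ + h * k)) ≤ N := by
      refine le_csSup hbdd ⟨_, by simp [hg₀x, hkx], ?_, rfl⟩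
      rw [norm_smul, Real.norm_eq_abs, abs_of_pos (by positivity), inv_mul_le_iff₀ (by positivity), mul_one]
      rw [ContinuousMap.norm_le _ (by positivity)]
      intro y
      have hky : |k y| ≤ 1 := (k.norm_coe_le_norm y).trans hk
      have hgy : |g₀ y| ≤ 1 := (g₀.norm_coe_le_norm y).trans hg₀
      simp only [ContinuousMap.add_apply, ContinuousMap.mul_apply, Real.norm_eq_abs]
      by_cases hy : η ≤ |g₀ y|
      · have : h y = 0 := h0 hy
        rw [this]; simp; linarith
      · have h3 : |h y * k y| ≤ 1 := by
          rw [abs_mul, abs_of_nonneg (h01 y).1]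
          exact mul_le_one₀ (h01 y).2 (abs_nonneg _) hky
        have := abs_add_le (g₀ y) (h y * k y)
        push Not at hy
        linarith
    rw [map_smul, smul_eq_mul, inv_mul_le_iff₀ (by positivity), map_add] at hmem
    linarith
  refine ContinuousLinearMap.opNorm_le_bound' _ hε.le ?_
  intro g hgn
  have hgn : 0 < ‖g‖ := lt_of_le_of_ne (norm_nonneg _) (Ne.symm hgn)
  set k : C(K, ℝ) := (2 * ‖g‖)⁻¹ • (g - ContinuousMap.const K (g x)) with hk
  have hkx : k x = 0 := by simp [hk]
  have hk1 : ‖k‖ ≤ 1 := by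
    rw [hk, norm_smul, Real.norm_eq_abs, abs_of_pos (by positivity), inv_mul_le_iff₀ (by positivity), mul_one]
    rw [ContinuousMap.norm_le _ (by positivity)]
    intro y
    have h1 := g.norm_coe_le_norm y
    have h2 := g.norm_coe_le_norm x
    have h3 := norm_sub_le (g y) (g x)
    simp only [ContinuousMap.sub_apply, ContinuousMap.const_apply]
    linarith
  have e1 : (mulDual h ν - ν h • (ContinuousMap.evalCLM ℝ x : C(K, ℝ) →L[ℝ] ℝ)) g =
      (2 * ‖g‖) * ν (h * k) := by
    have : h * k = (2 * ‖g‖)⁻¹ • (h * g - g x • h) := by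
      ext y
      simp only [hk, ContinuousMap.mul_apply, ContinuousMap.smul_apply, ContinuousMap.sub_apply, ContinuousMap.const_apply, smul_eq_mul]
      ring
    rw [this, map_smul, map_sub, map_smul, smul_eq_mul, mul_inv_cancel_left₀ (by positivity)]
    change ν (h * g) - ν h * g x = _
    simp [mul_comm]
  have m1 := main k hkx hk1
  have m2 := main (-k) (by simp [hkx]) (by simpa using hk1)
  rw [mul_neg, map_neg] at m2
  rw [e1, norm_mul, Real.norm_eq_abs, Real.norm_eq_abs, abs_of_pos (by positivity)]
  have m3 : |ν (h * k)| ≤ η + N * η := abs_le.2 ⟨by linarith, m1⟩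
  calc 2 * ‖g‖ * |ν (h * k)| ≤ 2 * ‖g‖ * (η + N * η) := by gcongr
    _ = ε * ‖g‖ := by rw [← hηε]; ring

theorem deltaSpan_eq_top (K : Type*) [TopologicalSpace K] [CompactSpace K] [T2Space K]
    (hscat : ∀ S : Set K, S.Nonempty → IsClosed S →
      ∃ x ∈ S, ∃ U : Set K, IsOpen U ∧ U ∩ S = {x}) (μ : StrongDual ℝ C(K, ℝ)) :
    μ ∈ deltaSpan K := by
  let I : Ideal C(K, ℝ) :=
    { carrier := {f | mulDual f μ ∈ deltaSpan K}
      add_mem' := by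
        intro f g hf hg
        have : mulDual (f + g) μ = mulDual f μ + mulDual g μ := by
          ext k; simp [mulDual_apply, add_mul]
        simp only [Set.mem_ofPred_eq, this]
        exact Submodule.add_mem _ hf hg
      zero_mem' := by
        have : mulDual 0 μ = 0 := by ext k; simp [mulDual_apply]
        simp only [Set.mem_ofPred_eq, this]
        exact Submodule.zero_mem _
      smul_mem' := by
        intro g f hf
        have : mulDual (g • f) μ = mulDual g (mulDual f μ) := by
          ext k; simp only [mulDual_apply, smul_eq_mul]; congr 1; ring
        simp only [Set.mem_ofPred_eq, this]
        exact mulDual_mem g hf }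
  have hmemI : ∀ f, f ∈ I ↔ mulDual f μ ∈ deltaSpan K := fun f => Iff.rfl
  have hIc : IsClosed (I : Set C(K, ℝ)) := by
    have hc : Continuous fun f : C(K, ℝ) => mulDual f μ :=
      ((ContinuousLinearMap.compL ℝ C(K, ℝ) C(K, ℝ) ℝ μ).comp
        (ContinuousLinearMap.mul ℝ C(K, ℝ))).continuous
    exact (deltaSpan_closed K).preimage hc
  have hI := ContinuousMap.idealOfSet_ofIdeal_isClosed hIc
  have hS : (ContinuousMap.setOfIdeal I)ᶜ = ∅ := by
    by_contra hne
    obtain ⟨x, hxS, U, hU, hUS⟩ := hscat _ (Set.nonempty_iff_ne_empty.2 hne)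
      (ContinuousMap.setOfIdeal_open I).isClosed_compl
    have hxU : x ∈ U := by
      have : x ∈ U ∩ (ContinuousMap.setOfIdeal I)ᶜ := by rw [hUS]; rfl
      exact this.1
    obtain ⟨f, hf0, hf1, -⟩ := exists_continuous_zero_one_of_isClosed
      (s := Uᶜ) (t := {x}) hU.isClosed_compl isClosed_singleton (by simpa using hxU)
    have hfx : f x = 1 := hf1 rfl
    have hfI : f ∈ I := by
      rw [hmemI]
      have hz : ∀ g : C(K, ℝ), g x = 0 → mulDual g (mulDual f μ) ∈ deltaSpan K := by
        intro g hg
        have h2 : f * g ∈ I := by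
          rw [← hI, ContinuousMap.mem_idealOfSet]
          intro y hy
          by_cases hyU : y ∈ U
          · have : y ∈ ({x} : Set K) := by rw [← hUS]; exact ⟨hyU, hy⟩
            rw [Set.mem_singleton_iff.1 this]; simp [hg]
          · have : f y = 0 := hf0 hyU
            simp [this]
        rw [hmemI] at h2
        have : mulDual g (mulDual f μ) = mulDual (f * g) μ := by
          ext k; simp only [mulDual_apply]; congr 1; ring
        rwa [this]
      rw [← SetLike.mem_coe, ← (deltaSpan_closed K).closure_eq]
      refine (Metric.mem_closure_iff (α := StrongDual ℝ C(K, ℝ))).2 ?_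
      intro ε hε
      obtain ⟨h, hhx, hh⟩ := exists_small (mulDual f μ) x (ε / 2) (by linarith)
      refine ⟨mulDual (1 - h) (mulDual f μ) +
        mulDual f μ h • (ContinuousMap.evalCLM ℝ x : C(K, ℝ) →L[ℝ] ℝ),
        Submodule.add_mem _ (hz _ (by simp [hhx])) (Submodule.smul_mem _ _ (delta_mem x)), ?_⟩
      refine lt_of_eq_of_lt (dist_eq_norm (E := StrongDual ℝ C(K, ℝ)) _ _) ?_
      refine lt_of_le_of_lt (le_of_eq_of_le ?_ hh) (by linarith)
      congr 1
      ext k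
      simp only [mulDual_apply, sub_mul, one_mul, sub_apply,
        add_apply, mul_sub, map_sub]
      ring
    have := (ContinuousMap.notMem_setOfIdeal.1 hxS) hfI
    rw [hfx] at this
    exact one_ne_zero this
  have h1 : (1 : C(K, ℝ)) ∈ I := by
    rw [← hI, ContinuousMap.mem_idealOfSet, hS]
    intro x hx
    exact hx.elim
  rw [hmemI] at h1
  have : mulDual 1 μ = μ := by ext k; simp [mulDual_apply]
  rwa [this] at h1

theorem exists_interp {K : Type*} [TopologicalSpace K] [CompactSpace K] [T2Space K]
    (F : Finset K) (a : K → ℝ) (ha : ∀ x, |a x| ≤ 1) :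
    ∃ g : C(K, ℝ), ‖g‖ ≤ 1 ∧ ∀ x ∈ F, g x = a x := by
  have hcl : IsClosed (F : Set K) := F.finite_toSet.isClosed
  have : Finite (F : Set K) := F.finite_toSet
  obtain ⟨g, hg1, hg2⟩ := ContinuousMap.exists_extension_forall_mem_of_isClosedEmbedding
    (⟨fun x : (F : Set K) => a x, continuous_of_discreteTopology⟩ : C((F : Set K), ℝ))
    (t := Set.Icc (-1) 1) (fun x => abs_le.1 (ha x)) ⟨0, by norm_num⟩ hcl.isClosedEmbedding_subtypeVal
  refine ⟨g, ?_, fun x hx => congrFun hg2 ⟨x, hx⟩⟩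
  rw [ContinuousMap.norm_le _ zero_le_one]
  intro y
  exact abs_le.2 (hg1 y)

theorem l1_hasSum {K : Type*} (a : lp (fun _ : K => ℝ) 1) : HasSum (fun x => |a x|) ‖a‖ := by
  simpa using lp.hasSum_norm (p := 1) (by simp) a

theorem l1_summable {K : Type*} [TopologicalSpace K] [CompactSpace K]
    (a : lp (fun _ : K => ℝ) 1) (g : C(K, ℝ)) : Summable (fun x => a x * g x) := by
  refine Summable.of_norm_bounded ((l1_hasSum a).summable.mul_right ‖g‖) fun x => ?_
  rw [norm_mul]
  exact mul_le_mul_of_nonneg_left (g.norm_coe_le_norm x) (norm_nonneg _)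

theorem l1_bound {K : Type*} [TopologicalSpace K] [CompactSpace K]
    (a : lp (fun _ : K => ℝ) 1) (g : C(K, ℝ)) : ‖∑' x, a x * g x‖ ≤ ‖a‖ * ‖g‖ := by
  refine tsum_of_norm_bounded ((l1_hasSum a).mul_right ‖g‖) fun x => ?_
  rw [norm_mul]
  exact mul_le_mul_of_nonneg_left (g.norm_coe_le_norm x) (norm_nonneg _)

noncomputable def l1Fun {K : Type*} [TopologicalSpace K] [CompactSpace K]
    (a : lp (fun _ : K => ℝ) 1) : StrongDual ℝ C(K, ℝ) :=
  LinearMap.mkContinuous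
    { toFun := fun g => ∑' x, a x * g x
      map_add' := fun f g => by
        simp only [ContinuousMap.add_apply, mul_add]
        exact (l1_summable a f).tsum_add (l1_summable a g)
      map_smul' := fun c g => by
        simp only [ContinuousMap.smul_apply, smul_eq_mul, RingHom.id_apply]
        rw [← tsum_mul_left]
        congr 1; ext x; ring } ‖a‖ (l1_bound a)

theorem l1Fun_apply {K : Type*} [TopologicalSpace K] [CompactSpace K]
    (a : lp (fun _ : K => ℝ) 1) (g : C(K, ℝ)) : l1Fun a g = ∑' x, a x * g x := rfl

theorem l1Fun_norm {K : Type*} [TopologicalSpace K] [CompactSpace K] [T2Space K]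
    (a : lp (fun _ : K => ℝ) 1) : ‖l1Fun a‖ = ‖a‖ := by
  apply le_antisymm
  · exact LinearMap.mkContinuous_norm_le _ (norm_nonneg _) _
  · refine le_of_forall_pos_le_add fun ε hε => ?_
    obtain ⟨F, hF⟩ := ((l1_hasSum a).eventually (lt_mem_nhds
        (show ‖a‖ - ε / 2 < ‖a‖ by linarith))).exists
    obtain ⟨g, hg1, hgF⟩ := exists_interp F (fun x => SignType.sign (a x)) (by
      intro x
      rcases lt_trichotomy (a x) 0 with h | h | h <;> simp [h])
    have h1 := sum_le_hasSum F (fun x _ => ?_) ((l1_summable a g).hasSum.add (l1_hasSum a))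
    · rw [← l1Fun_apply, Finset.sum_add_distrib] at h1
      have h2 : ∑ x ∈ F, a x * g x = ∑ x ∈ F, |a x| := by
        refine Finset.sum_congr rfl fun x hx => ?_
        rw [hgF x hx]; exact self_mul_sign _
      have h3 : l1Fun a g ≤ ‖l1Fun a‖ := (le_abs_self _).trans ((l1Fun a).unit_le_opNorm g hg1)
      linarith
    · have hx : |g x| ≤ 1 := (g.norm_coe_le_norm x).trans hg1
      have h4 : |a x * g x| ≤ |a x| := by
        rw [abs_mul]; exact mul_le_of_le_one_right (abs_nonneg _) hx
      have := (abs_le.1 h4).1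
      linarith

noncomputable def l1Iso (K : Type*) [TopologicalSpace K] [CompactSpace K] [T2Space K] :
    lp (fun _ : K => ℝ) 1 →ₗᵢ[ℝ] StrongDual ℝ C(K, ℝ) where
  toFun := l1Fun
  map_add' a b := by
    ext g
    simp only [l1Fun_apply, add_apply]
    rw [← (l1_summable a g).tsum_add (l1_summable b g)]
    congr 1; ext x; simp [add_mul]
  map_smul' c a := by
    ext g
    simp only [l1Fun_apply, smul_apply, RingHom.id_apply, smul_eq_mul]
    rw [← tsum_mul_left]
    congr 1; ext x; simp [mul_assoc]
  norm_map' := l1Fun_norm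

theorem l1Iso_surj (K : Type*) [TopologicalSpace K] [CompactSpace K] [T2Space K]
    (hscat : ∀ S : Set K, S.Nonempty → IsClosed S →
      ∃ x ∈ S, ∃ U : Set K, IsOpen U ∧ U ∩ S = {x}) : Function.Surjective (l1Iso K) := by
  classical
  intro μ
  have h1 : deltaSpan K ≤ LinearMap.range (l1Iso K).toLinearMap := by
    refine Submodule.topologicalClosure_minimal _ ?_ ?_
    · rw [Submodule.span_le]
      rintro _ ⟨x, rfl⟩
      refine ⟨lp.single 1 x 1, ?_⟩
      ext g
      change ∑' y, (lp.single 1 x (1 : ℝ) : lp (fun _ : K => ℝ) 1) y * g y = g x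
      rw [tsum_eq_single x]
      · simp
      · intro y hy
        simp [hy]
    · rw [LinearMap.coe_range]
      exact (Isometry.isClosedEmbedding (α := lp (fun _ : K => ℝ) 1) (γ := StrongDual ℝ C(K, ℝ))
        (f := l1Iso K) (l1Iso K).isometry).isClosed_range
  exact h1 (deltaSpan_eq_top K hscat μ)

/-- If `K` is a scattered compact Hausdorff space (every nonempty closed
subset has a point isolated in it), then the weak Borel σ-algebra of `C*(K)` coincides
with the norm Borel σ-algebra. -/
theorem weak_borel_eq_norm_borel_of_scattered
    (K : Type*) [TopologicalSpace K] [CompactSpace K] [T2Space K]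
    (hscat : ∀ S : Set K, S.Nonempty → IsClosed S →
      ∃ x ∈ S, ∃ U : Set K, IsOpen U ∧ U ∩ S = {x}) :
    @borel (StrongDual ℝ C(K, ℝ)) (weakTopology (StrongDual ℝ C(K, ℝ))) = borel (StrongDual ℝ C(K, ℝ)) := by
  let T := LinearIsometryEquiv.ofSurjective (l1Iso K) (l1Iso_surj K hscat)
  refine aux_borel (E := StrongDual ℝ C(K, ℝ)) (ι := K) (fun x => (lp.evalCLM ℝ (fun _ : K => ℝ) 1 x).comp
    (T.symm.toContinuousLinearEquiv : StrongDual ℝ C(K, ℝ) →L[ℝ] lp (fun _ : K => ℝ) 1)) ?_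
  intro μ
  have := l1_hasSum (T.symm μ)
  rw [T.symm.norm_map] at this
  exact this
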